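/- Let k ≥ 1 and let σ be a permutation of {1,…,k}. Then the number of uncovered slope indices is at most the number of valley indices: |I_us| ≤ |I_v|. -/

import Mathlib

/-- The extension `σ̃` of a permutation `σ` of `{1,…,k}` to `{0,1,…,k+1}`, with
`σ̃(0) = 0` and `σ̃(k+1) = k+1`.  Here `σ : Equiv.Perm (Fin k)` acts on `{0,…,k-1}`,
shifted by one. -/
def sigmaTilde (k : ℕ) (σ : Equiv.Perm (Fin k)) (j : ℕ) : ℕ :=
  if h : 1 ≤ j ∧ j ≤ k then ((σ ⟨j - 1, by omega⟩ : Fin k) : ℕ) + 1 else j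

/-- The point `(j, σ(j))` is a *peak*: `σ(j) < min {σ̃(j-1), σ̃(j+1)}`. -/
def IsPeakAt (k : ℕ) (σ : Equiv.Perm (Fin k)) (j : ℕ) : Prop :=
  sigmaTilde k σ j < min (sigmaTilde k σ (j - 1)) (sigmaTilde k σ (j + 1))

/-- The point `(j, σ(j))` is a *valley*: `σ(j) > max {σ̃(j-1), σ̃(j+1)}`. -/
def IsValleyAt (k : ℕ) (σ : Equiv.Perm (Fin k)) (j : ℕ) : Prop :=
  max (sigmaTilde k σ (j - 1)) (sigmaTilde k σ (j + 1)) < sigmaTilde k σ j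

/-- The point `(j, σ(j))` is a *ladder*: `σ(j) - 1 ∈ {σ̃(j-1), σ̃(j+1)}` and the point is
not a valley. -/
def IsLadderAt (k : ℕ) (σ : Equiv.Perm (Fin k)) (j : ℕ) : Prop :=
  (sigmaTilde k σ j - 1 = sigmaTilde k σ (j - 1) ∨
    sigmaTilde k σ j - 1 = sigmaTilde k σ (j + 1)) ∧ ¬IsValleyAt k σ j

instance (k : ℕ) (σ : Equiv.Perm (Fin k)) (j : ℕ) : Decidable (IsPeakAt k σ j) := by
  unfold IsPeakAt; infer_instance

instance (k : ℕ) (σ : Equiv.Perm (Fin k)) (j : ℕ) : Decidable (IsValleyAt k σ j) := by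
  unfold IsValleyAt; infer_instance

instance (k : ℕ) (σ : Equiv.Perm (Fin k)) (j : ℕ) : Decidable (IsLadderAt k σ j) := by
  unfold IsLadderAt; infer_instance

/-- `ℓ(σ)`: the number of `j ∈ {1,…,k}` such that `(j, σ(j))` is a ladder. -/
def ladderCount (k : ℕ) (σ : Equiv.Perm (Fin k)) : ℕ :=
  ((Finset.Icc 1 k).filter fun j => IsLadderAt k σ j).card

/-- The degree of a permutation: `deg(σ) := k - ℓ(σ)`. -/
def permDegree (k : ℕ) (σ : Equiv.Perm (Fin k)) : ℕ := k - ladderCount k σ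

/-- The entries of the matrix `M(σ)`, with row and column indices `i, j ∈ {1,…,k+1}`:
`M(σ)_{ij} = 1` if `σ̃(j-1) < i ≤ σ̃(j)`, `M(σ)_{ij} = -1` if `σ̃(j) < i ≤ σ̃(j-1)`,
and `0` otherwise. -/
def MmatN (k : ℕ) (σ : Equiv.Perm (Fin k)) (i j : ℕ) : ℤ :=
  if sigmaTilde k σ (j - 1) < i ∧ i ≤ sigmaTilde k σ j then 1
  else if sigmaTilde k σ j < i ∧ i ≤ sigmaTilde k σ (j - 1) then -1
  else 0

/-- `t(j)`: the top (smallest row index) of the tower of nonzero entries in column `j`. -/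
noncomputable def towerTop (k : ℕ) (σ : Equiv.Perm (Fin k)) (j : ℕ) : ℕ :=
  sInf {i : ℕ | MmatN k σ i j ≠ 0}

/-- `b(j)`: the bottom (largest row index) of the tower of nonzero entries in column `j`. -/
noncomputable def towerBot (k : ℕ) (σ : Equiv.Perm (Fin k)) (j : ℕ) : ℕ :=
  sSup {i : ℕ | MmatN k σ i j ≠ 0}

/-- The set `I_p` of peak indices `i ∈ {1,…,k}` (the point `(σ⁻¹(i), i)` is a peak). -/
def peakSet (k : ℕ) (σ : Equiv.Perm (Fin k)) : Set ℕ :=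
  {i | 1 ≤ i ∧ i ≤ k ∧ IsPeakAt k σ (sigmaTilde k σ⁻¹ i)}

/-- The set `I_v` of valley indices `i ∈ {1,…,k}` (the point `(σ⁻¹(i), i)` is a valley). -/
def valleySet (k : ℕ) (σ : Equiv.Perm (Fin k)) : Set ℕ :=
  {i | 1 ≤ i ∧ i ≤ k ∧ IsValleyAt k σ (sigmaTilde k σ⁻¹ i)}

/-- The set `I_s` of slope indices `i ∈ {1,…,k}` (the point `(σ⁻¹(i), i)` is neither a
peak, nor a valley, nor a ladder). -/
def slopeSet (k : ℕ) (σ : Equiv.Perm (Fin k)) : Set ℕ :=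
  {i | 1 ≤ i ∧ i ≤ k ∧ ¬IsPeakAt k σ (sigmaTilde k σ⁻¹ i) ∧
    ¬IsValleyAt k σ (sigmaTilde k σ⁻¹ i) ∧ ¬IsLadderAt k σ (sigmaTilde k σ⁻¹ i)}

/-- The pivot column `c(i)`: for a non-peak index `i` this is the unique column `j` with
`b(j) = i`, except that for a valley index `i` (where both columns `σ̃⁻¹(i)` and
`σ̃⁻¹(i)+1` have bottom `i`) it is the one of these two columns with the smaller top. -/
noncomputable def pivotCol (k : ℕ) (σ : Equiv.Perm (Fin k)) (i : ℕ) : ℕ :=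
  if IsValleyAt k σ (sigmaTilde k σ⁻¹ i) then
    if towerTop k σ (sigmaTilde k σ⁻¹ i) < towerTop k σ (sigmaTilde k σ⁻¹ i + 1) then
      sigmaTilde k σ⁻¹ i
    else sigmaTilde k σ⁻¹ i + 1
  else sInf {j : ℕ | towerBot k σ j = i}

/-- The next element of `I_v ∪ I_s` strictly after `h`. -/
noncomputable def nextVS (k : ℕ) (σ : Equiv.Perm (Fin k)) (h : ℕ) : ℕ :=
  sInf {h' : ℕ | h' ∈ valleySet k σ ∪ slopeSet k σ ∧ h < h'}

/-- The set `I_cs` of covered slope indices: slope indices `h` such that there is a next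
element `h'` of `I_v ∪ I_s` after `h` and `t(c(h')) ≤ h`. -/
def coveredSlopeSet (k : ℕ) (σ : Equiv.Perm (Fin k)) : Set ℕ :=
  {h | h ∈ slopeSet k σ ∧ (∃ h' ∈ valleySet k σ ∪ slopeSet k σ, h < h') ∧
    towerTop k σ (pivotCol k σ (nextVS k σ h)) ≤ h}

/-- The set `I_us` of uncovered slope indices. -/
def uncoveredSlopeSet (k : ℕ) (σ : Equiv.Perm (Fin k)) : Set ℕ :=
  slopeSet k σ \ coveredSlopeSet k σ

/-!
Let `x` be the lower neighbour of `n`, the smaller of the two values next to `n` in `σ̃`. For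
`1 ≤ n ≤ k`, `n` is a peak if `n < x`, a ladder if `x + 1 = n`, and a valley or a slope if
`x + 1 < n`. In the last case, if `x + 1` is a ladder then both neighbours of `x` are known to be
`x + 1` and `n`, so `x` is a peak. Hence `x` or `x + 1` is a peak unless `x + 1` is itself a valley
or a slope.

The tower of the pivot column of `n` starts at `x + 1`. So if `h` is an uncovered slope and `n` is
the next valley or slope, then `h ≤ x` and there is a peak strictly between `h` and `n`; the same
holds for `h = 0`. Therefore peaks separate the elements of `{0} ∪ I_us`, which gives
`|I_us| ≤ |I_p|`. In the same way valleys separate the positions of the peaks from one another and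
from the position `0`, so `|I_p| ≤ |I_v|`.
-/

section Interleaving

variable {α : Type*} [LinearOrder α]

theorem ncard_le_ncard_of_interleaved {s t : Set α} (hs : s.Finite) (ht : t.Finite) {m : α}
    (hm : ∀ b ∈ s, m < b)
    (h : ∀ a ∈ insert m s, ∀ b ∈ s, a < b → ∃ c ∈ t, a < c ∧ c < b) :
    s.ncard ≤ t.ncard := by
  have hcard : (hs.insert m).toFinset.card ≤ ht.toFinset.card + 1 := by
    refine Finset.card_le_of_interleaved fun a ha b hb hab _ => ?_
    simp only [Set.Finite.mem_toFinset] at ha hb ⊢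
    refine h a ha b (hb.resolve_left ?_) hab
    rintro rfl
    rcases ha with rfl | ha
    exacts [hab.false, (hm a ha).not_gt hab]
  rw [← Set.ncard_eq_toFinset_card _ (hs.insert m), ← Set.ncard_eq_toFinset_card _ ht,
    Set.ncard_insert_of_notMem (fun hms => (hm m hms).false) hs] at hcard
  exact Nat.le_of_succ_le_succ hcard

theorem exists_strict_localMax_between {f : ℕ → α} (hf : ∀ j, f j ≠ f (j + 1)) {a b : ℕ}
    (hab : a < b) (ha : f a < f (a + 1)) (hb : f b < f (b - 1)) :
    ∃ c, a < c ∧ c < b ∧ max (f (c - 1)) (f (c + 1)) < f c := by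
  obtain ⟨c, hc, hmax⟩ := Finset.exists_max_image (Finset.Icc a b) f ⟨a, by simp [hab.le]⟩
  simp only [Finset.mem_Icc] at hc hmax
  have hac : a ≠ c := by
    rintro rfl
    exact (hmax (a + 1) (by omega)).not_gt ha
  have hcb : c ≠ b := by
    rintro rfl
    exact (hmax (c - 1) (by omega)).not_gt hb
  have hpred : f (c - 1) ≠ f c := by
    simpa only [Nat.sub_add_cancel (show 1 ≤ c by omega)] using hf (c - 1)
  exact ⟨c, by omega, by omega, max_lt ((hmax _ (by omega)).lt_of_ne hpred)
    ((hmax _ (by omega)).lt_of_ne (hf c).symm)⟩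

end Interleaving

/-- The smaller of the two values that `σ̃` takes next to the position of the value `i`. It is
meant for `1 ≤ i`: at `i = 0` the truncated subtraction makes `0` its own neighbour. -/
def lowerNeighbor (k : ℕ) (σ : Equiv.Perm (Fin k)) (i : ℕ) : ℕ :=
  min (sigmaTilde k σ (sigmaTilde k σ⁻¹ i - 1)) (sigmaTilde k σ (sigmaTilde k σ⁻¹ i + 1))

section SigmaTilde

variable {k : ℕ} (σ : Equiv.Perm (Fin k))

theorem sigmaTilde_zero : sigmaTilde k σ 0 = 0 := by
  simp [sigmaTilde]

theorem sigmaTilde_mem_Icc {j : ℕ} (hj : 1 ≤ j ∧ j ≤ k) :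
    1 ≤ sigmaTilde k σ j ∧ sigmaTilde k σ j ≤ k := by
  rw [sigmaTilde, dif_pos hj]
  exact ⟨Nat.le_add_left _ _, (σ _).isLt⟩

theorem sigmaTilde_inv_sigmaTilde (j : ℕ) : sigmaTilde k σ⁻¹ (sigmaTilde k σ j) = j := by
  by_cases hj : 1 ≤ j ∧ j ≤ k
  · rw [sigmaTilde, dif_pos (sigmaTilde_mem_Icc σ hj)]
    simp [sigmaTilde, hj]
  · simp only [sigmaTilde, dif_neg hj]

theorem sigmaTilde_sigmaTilde_inv (i : ℕ) : sigmaTilde k σ (sigmaTilde k σ⁻¹ i) = i := by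
  simpa using sigmaTilde_inv_sigmaTilde σ⁻¹ i

theorem sigmaTilde_injective : Function.Injective (sigmaTilde k σ) :=
  Function.LeftInverse.injective (sigmaTilde_inv_sigmaTilde σ)

theorem sigmaTilde_eq_iff {i j : ℕ} : sigmaTilde k σ j = i ↔ j = sigmaTilde k σ⁻¹ i := by
  rw [← (sigmaTilde_injective σ⁻¹).eq_iff, sigmaTilde_inv_sigmaTilde]

theorem sigmaTilde_mem_Icc_iff {j : ℕ} :
    1 ≤ sigmaTilde k σ j ∧ sigmaTilde k σ j ≤ k ↔ 1 ≤ j ∧ j ≤ k :=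
  ⟨fun h => sigmaTilde_inv_sigmaTilde σ j ▸ sigmaTilde_mem_Icc σ⁻¹ h, sigmaTilde_mem_Icc σ⟩

theorem sigmaTilde_pos {j : ℕ} (hj : 0 < j) : 0 < sigmaTilde k σ j := by
  have := (sigmaTilde_injective σ).ne hj.ne'
  rw [sigmaTilde_zero] at this
  exact Nat.pos_of_ne_zero this

theorem image_sigmaTilde_setOf (P : ℕ → Prop) :
    sigmaTilde k σ '' {j | 1 ≤ j ∧ j ≤ k ∧ P j} =
      {i | 1 ≤ i ∧ i ≤ k ∧ P (sigmaTilde k σ⁻¹ i)} := by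
  rw [Set.image_eq_preimage_of_inverse (sigmaTilde_inv_sigmaTilde σ) (sigmaTilde_sigmaTilde_inv σ)]
  ext i
  simp only [Set.mem_preimage, Set.mem_ofPred_eq, ← and_assoc, sigmaTilde_mem_Icc_iff]

theorem peakSet_finite : (peakSet k σ).Finite :=
  (Set.finite_Icc 1 k).subset fun _ hi => ⟨hi.1, hi.2.1⟩

theorem ncard_peakSet_le_ncard_valleySet : (peakSet k σ).ncard ≤ (valleySet k σ).ncard := by
  have hfin (P : ℕ → Prop) : {j | 1 ≤ j ∧ j ≤ k ∧ P j}.Finite :=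
    (Set.finite_Icc 1 k).subset fun _ hj => ⟨hj.1, hj.2.1⟩
  have hinj := sigmaTilde_injective σ
  rw [peakSet, valleySet, ← image_sigmaTilde_setOf σ (IsPeakAt k σ),
    ← image_sigmaTilde_setOf σ (IsValleyAt k σ), Set.ncard_image_of_injective _ hinj,
    Set.ncard_image_of_injective _ hinj]
  refine ncard_le_ncard_of_interleaved (hfin _) (hfin _) (m := 0) (fun _ hb => hb.1) ?_
  rintro a ha b ⟨-, hbk, hb⟩ hab
  have hasc : sigmaTilde k σ a < sigmaTilde k σ (a + 1) := by
    rcases ha with rfl | ⟨-, -, ha⟩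
    · rw [sigmaTilde_zero]
      exact sigmaTilde_pos σ (Nat.succ_pos _)
    · exact (lt_min_iff.1 ha).2
  obtain ⟨c, hac, hcb, hc⟩ := exists_strict_localMax_between
    (fun j => hinj.ne j.succ_ne_self.symm) hab hasc (lt_min_iff.1 hb).1
  exact ⟨c, ⟨by omega, by omega, hc⟩, hac, hcb⟩

theorem sigmaTilde_inv_lowerNeighbor {i : ℕ} (hi : 0 < i) :
    sigmaTilde k σ⁻¹ (lowerNeighbor k σ i) + 1 = sigmaTilde k σ⁻¹ i ∨
      sigmaTilde k σ⁻¹ (lowerNeighbor k σ i) = sigmaTilde k σ⁻¹ i + 1 := by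
  have hpos := sigmaTilde_pos σ⁻¹ hi
  rcases min_choice (sigmaTilde k σ (sigmaTilde k σ⁻¹ i - 1))
    (sigmaTilde k σ (sigmaTilde k σ⁻¹ i + 1)) with h | h
  · left
    rw [lowerNeighbor, h, sigmaTilde_inv_sigmaTilde, Nat.sub_add_cancel hpos]
  · right
    rw [lowerNeighbor, h, sigmaTilde_inv_sigmaTilde]

theorem lowerNeighbor_ne {i : ℕ} (hi : 0 < i) : lowerNeighbor k σ i ≠ i := fun h => by
  have := sigmaTilde_inv_lowerNeighbor σ hi
  rw [h] at this
  omega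

theorem isPeakAt_sigmaTilde_inv_iff {i : ℕ} :
    IsPeakAt k σ (sigmaTilde k σ⁻¹ i) ↔ i < lowerNeighbor k σ i := by
  rw [IsPeakAt, sigmaTilde_sigmaTilde_inv, lowerNeighbor]

theorem isLadderAt_sigmaTilde_inv_iff {i : ℕ} (hi : 0 < i) :
    IsLadderAt k σ (sigmaTilde k σ⁻¹ i) ↔ lowerNeighbor k σ i + 1 = i := by
  have hpos := sigmaTilde_pos σ⁻¹ hi
  have hne : sigmaTilde k σ (sigmaTilde k σ⁻¹ i - 1) ≠
      sigmaTilde k σ (sigmaTilde k σ⁻¹ i + 1) := (sigmaTilde_injective σ).ne (by omega)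
  rw [IsLadderAt, IsValleyAt, sigmaTilde_sigmaTilde_inv, lowerNeighbor]
  omega

theorem mem_peakSet_iff {i : ℕ} :
    i ∈ peakSet k σ ↔ 1 ≤ i ∧ i ≤ k ∧ i < lowerNeighbor k σ i := by
  rw [peakSet, Set.mem_ofPred_eq, isPeakAt_sigmaTilde_inv_iff]

theorem mem_valleySet_union_slopeSet_iff {i : ℕ} :
    i ∈ valleySet k σ ∪ slopeSet k σ ↔ 1 ≤ i ∧ i ≤ k ∧ lowerNeighbor k σ i + 1 < i := by
  have hpeak : IsValleyAt k σ (sigmaTilde k σ⁻¹ i) → ¬IsPeakAt k σ (sigmaTilde k σ⁻¹ i) :=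
    fun hv hp => (max_lt_iff.1 hv).2.asymm (lt_min_iff.1 hp).2
  have hladder : IsValleyAt k σ (sigmaTilde k σ⁻¹ i) → ¬IsLadderAt k σ (sigmaTilde k σ⁻¹ i) :=
    fun hv hl => hl.2 hv
  have hunion : i ∈ valleySet k σ ∪ slopeSet k σ ↔ 1 ≤ i ∧ i ≤ k ∧
      ¬IsPeakAt k σ (sigmaTilde k σ⁻¹ i) ∧ ¬IsLadderAt k σ (sigmaTilde k σ⁻¹ i) := by
    simp only [valleySet, slopeSet, Set.mem_union, Set.mem_ofPred_eq]
    tauto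
  rw [hunion]
  refine and_congr_right fun hi => and_congr_right fun _ => ?_
  rw [isPeakAt_sigmaTilde_inv_iff, isLadderAt_sigmaTilde_inv_iff σ hi]
  have := lowerNeighbor_ne σ hi
  omega

theorem lowerNeighbor_mem_peakSet_of_eq {a b : ℕ} (hab : a ≠ b) (hak : a ≤ k)
    (ha : lowerNeighbor k σ a < a) (hb : lowerNeighbor k σ b < b)
    (hshared : lowerNeighbor k σ a = lowerNeighbor k σ b) : lowerNeighbor k σ a ∈ peakSet k σ := by
  have hqa := sigmaTilde_inv_lowerNeighbor σ (Nat.zero_lt_of_lt ha)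
  have hqb := sigmaTilde_inv_lowerNeighbor σ (Nat.zero_lt_of_lt hb)
  have hne := (sigmaTilde_injective σ⁻¹).ne hab
  rw [← hshared] at hqb hb
  generalize lowerNeighbor k σ a = x at *
  have hx : 1 ≤ x := by
    by_contra! h0
    obtain rfl : x = 0 := by omega
    rw [sigmaTilde_zero] at hqa hqb
    omega
  refine (mem_peakSet_iff σ).2 ⟨hx, by omega, ?_⟩
  have hsides : sigmaTilde k σ⁻¹ x - 1 = sigmaTilde k σ⁻¹ a ∧
        sigmaTilde k σ⁻¹ x + 1 = sigmaTilde k σ⁻¹ b ∨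
      sigmaTilde k σ⁻¹ x - 1 = sigmaTilde k σ⁻¹ b ∧
        sigmaTilde k σ⁻¹ x + 1 = sigmaTilde k σ⁻¹ a := by
    omega
  rcases hsides with ⟨hl, hr⟩ | ⟨hl, hr⟩ <;>
    simp only [lowerNeighbor, hl, hr, sigmaTilde_sigmaTilde_inv, lt_min_iff, ha, hb, and_self]

theorem exists_peak_between {h n : ℕ} (hn : n ∈ valleySet k σ ∪ slopeSet k σ)
    (hgap : ∀ i, h < i → i < n → i ∉ valleySet k σ ∪ slopeSet k σ)
    (hh : h ∉ peakSet k σ) (hle : h ≤ lowerNeighbor k σ n) :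
    ∃ p ∈ peakSet k σ, h < p ∧ p < n := by
  obtain ⟨-, hnk, hlow⟩ := (mem_valleySet_union_slopeSet_iff σ).1 hn
  set x := lowerNeighbor k σ n
  by_cases hpeak : x + 1 ∈ peakSet k σ
  · exact ⟨x + 1, hpeak, by omega, hlow⟩
  have hladder : lowerNeighbor k σ (x + 1) = x := by
    have hgap' := hgap (x + 1) (by omega) hlow
    have hne := lowerNeighbor_ne σ (Nat.add_one_pos x)
    rw [mem_peakSet_iff] at hpeak
    rw [mem_valleySet_union_slopeSet_iff] at hgap'
    omega
  have hxpeak : x ∈ peakSet k σ := by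
    rw [← hladder]
    exact lowerNeighbor_mem_peakSet_of_eq σ hlow.ne (by omega) (by omega) (by omega) (by omega)
  exact ⟨x, hxpeak, hle.lt_of_ne fun hhx => hh (hhx ▸ hxpeak), by omega⟩

theorem MmatN_ne_zero_iff {i j : ℕ} : MmatN k σ i j ≠ 0 ↔
    i ∈ Set.Ioc (min (sigmaTilde k σ (j - 1)) (sigmaTilde k σ j))
      (max (sigmaTilde k σ (j - 1)) (sigmaTilde k σ j)) := by
  unfold MmatN
  split_ifs <;> simp <;> omega

theorem towerTop_eq {j : ℕ} (hj : 0 < j) :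
    towerTop k σ j = min (sigmaTilde k σ (j - 1)) (sigmaTilde k σ j) + 1 := by
  have hne : sigmaTilde k σ (j - 1) ≠ sigmaTilde k σ j := (sigmaTilde_injective σ).ne (by omega)
  simp only [towerTop, MmatN_ne_zero_iff]
  refine IsLeast.csInf_eq ⟨?_, fun i hi => hi.1⟩
  exact ⟨Nat.lt_succ_self _, by omega⟩

theorem towerBot_eq (j : ℕ) :
    towerBot k σ j = max (sigmaTilde k σ (j - 1)) (sigmaTilde k σ j) := by
  simp only [towerBot, MmatN_ne_zero_iff]
  rcases j.eq_zero_or_pos with rfl | hj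
  · simp [sigmaTilde_zero]
  · exact csSup_Ioc (min_lt_max.2 ((sigmaTilde_injective σ).ne (by omega)))

theorem towerBot_eq_iff {i j : ℕ} (hi : 0 < i) : towerBot k σ j = i ↔
    (j = sigmaTilde k σ⁻¹ i ∧ sigmaTilde k σ (sigmaTilde k σ⁻¹ i - 1) < i) ∨
      (j = sigmaTilde k σ⁻¹ i + 1 ∧ sigmaTilde k σ (sigmaTilde k σ⁻¹ i + 1) < i) := by
  rw [towerBot_eq]
  constructor
  · intro hmax
    have hj : 0 < j := by
      by_contra! h0
      obtain rfl : j = 0 := by omega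
      simp only [zero_tsub, sigmaTilde_zero, max_self] at hmax
      omega
    have hne : sigmaTilde k σ (j - 1) ≠ sigmaTilde k σ j := (sigmaTilde_injective σ).ne (by omega)
    rcases max_choice (sigmaTilde k σ (j - 1)) (sigmaTilde k σ j) with h | h
    · have hq := (sigmaTilde_eq_iff σ).1 (h.symm.trans hmax)
      rw [← hq, Nat.sub_add_cancel hj]
      omega
    · rw [← (sigmaTilde_eq_iff σ).1 (h.symm.trans hmax)]
      omega
  · rintro (⟨rfl, hlt⟩ | ⟨rfl, hlt⟩)
    · rw [sigmaTilde_sigmaTilde_inv, max_eq_right hlt.le]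
    · rw [Nat.add_sub_cancel, sigmaTilde_sigmaTilde_inv, max_eq_left hlt.le]

theorem towerTop_pivotCol {i : ℕ} (hi : lowerNeighbor k σ i < i) :
    towerTop k σ (pivotCol k σ i) = lowerNeighbor k σ i + 1 := by
  have hipos : 0 < i := Nat.zero_lt_of_lt hi
  have htop := towerTop_eq σ (sigmaTilde_pos σ⁻¹ hipos)
  have htop_succ := towerTop_eq σ (Nat.add_one_pos (sigmaTilde k σ⁻¹ i))
  rw [sigmaTilde_sigmaTilde_inv] at htop
  rw [Nat.add_sub_cancel, sigmaTilde_sigmaTilde_inv] at htop_succ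
  simp only [pivotCol, IsValleyAt, towerBot_eq_iff σ hipos, sigmaTilde_sigmaTilde_inv]
  unfold lowerNeighbor at hi ⊢
  by_cases hvalley : max (sigmaTilde k σ (sigmaTilde k σ⁻¹ i - 1))
      (sigmaTilde k σ (sigmaTilde k σ⁻¹ i + 1)) < i
  · rw [if_pos hvalley]
    split_ifs <;> omega
  · rw [if_neg hvalley]
    by_cases hpred : sigmaTilde k σ (sigmaTilde k σ⁻¹ i - 1) < i
    · have hsucc : ¬sigmaTilde k σ (sigmaTilde k σ⁻¹ i + 1) < i := by omega
      simp only [hpred, hsucc, and_true, and_false, or_false, Set.ofPred_eq_eq_singleton,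
        csInf_singleton]
      omega
    · have hsucc : sigmaTilde k σ (sigmaTilde k σ⁻¹ i + 1) < i := by omega
      simp only [hpred, hsucc, and_true, and_false, false_or, Set.ofPred_eq_eq_singleton,
        csInf_singleton]
      omega

theorem isLeast_nextVS {h m : ℕ} (hm : m ∈ valleySet k σ ∪ slopeSet k σ) (hhm : h < m) :
    IsLeast {h' | h' ∈ valleySet k σ ∪ slopeSet k σ ∧ h < h'} (nextVS k σ h) :=
  ⟨Nat.sInf_mem ⟨m, hm, hhm⟩, fun _ => Nat.sInf_le⟩

theorem le_lowerNeighbor_nextVS {h m : ℕ} (hh : h ∈ uncoveredSlopeSet k σ)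
    (hm : m ∈ valleySet k σ ∪ slopeSet k σ) (hhm : h < m) :
    h ≤ lowerNeighbor k σ (nextVS k σ h) := by
  obtain ⟨-, -, hlow⟩ := (mem_valleySet_union_slopeSet_iff σ).1 (isLeast_nextVS σ hm hhm).1.1
  by_contra! hlt
  refine hh.2 ⟨hh.1, ⟨m, hm, hhm⟩, ?_⟩
  rwa [towerTop_pivotCol σ (by omega)]

theorem uncoveredSlopeSet_finite : (uncoveredSlopeSet k σ).Finite :=
  (Set.finite_Icc 1 k).subset fun _ hi => ⟨hi.1.1, hi.1.2.1⟩

end SigmaTilde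

/-- The paper's Lemma 8.4: for every permutation `σ` of `{1,…,k}`, the number of
uncovered slope indices is at most the number of valley indices, `|I_us| ≤ |I_v|`. -/
theorem card_uncoveredSlopes_le_card_valleys
    (k : ℕ) (hk : 1 ≤ k) (σ : Equiv.Perm (Fin k)) :
    (uncoveredSlopeSet k σ).ncard ≤ (valleySet k σ).ncard := by
  refine le_trans ?_ (ncard_peakSet_le_ncard_valleySet σ)
  refine ncard_le_ncard_of_interleaved (uncoveredSlopeSet_finite σ) (peakSet_finite σ) (m := 0)
    (fun _ hb => hb.1.1) fun a ha b hb hab => ?_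
  have hbVS : b ∈ valleySet k σ ∪ slopeSet k σ := Or.inr hb.1
  have hnext := isLeast_nextVS σ hbVS hab
  have hgap : ∀ i, a < i → i < nextVS k σ a → i ∉ valleySet k σ ∪ slopeSet k σ :=
    fun i hai hi hiVS => (hnext.2 ⟨hiVS, hai⟩).not_gt hi
  have hpeak : a ∉ peakSet k σ := by
    rcases ha with rfl | ha
    exacts [fun h => absurd h.1 (by omega), fun h => ha.1.2.2.1 h.2.2]
  have hlow : a ≤ lowerNeighbor k σ (nextVS k σ a) := by
    rcases ha with rfl | ha
    exacts [Nat.zero_le _, le_lowerNeighbor_nextVS σ ha hbVS hab]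
  obtain ⟨p, hp, hap, hpn⟩ := exists_peak_between σ hnext.1.1 hgap hpeak hlow
  exact ⟨p, hp, hap, hpn.trans_le (hnext.2 ⟨hbVS, hab⟩)⟩
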